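/- The complex Gamma function Γ : ℂ → ℂ is differentially transcendental: there do not exist n ∈ ℕ and a nonzero polynomial P ∈ ℂ[X₀, X₁, …, X_{n+1}] such that P(z, Γ(z), Γ′(z), …, Γ⁽ⁿ⁾(z)) = 0 for every z ∈ ℂ at which Γ is analytic (i.e., every z that is not a nonpositive integer). -/

import Mathlib

namespace HolderGamma
open MvPolynomial MonomialOrder

noncomputable def mo : MonomialOrder ℕᵒᵈ := MonomialOrder.lex

noncomputable def T {S R : Type*} [CommRing S] [CommRing R] (φ : S →+* R) (c : R) (d : ℕ → R) :
    MvPolynomial ℕᵒᵈ S →+* MvPolynomial ℕᵒᵈ R :=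
  eval₂Hom (C.comp φ) (fun k => C c * X k +
    C (d (OrderDual.ofDual k)) * X (OrderDual.toDual (OrderDual.ofDual k - 1)))

/-- The variable `Y_k`. -/
noncomputable def Y (R : Type*) [CommRing R] (k : ℕ) : MvPolynomial ℕᵒᵈ R :=
  X (OrderDual.toDual k)

lemma T_C {S R : Type*} [CommRing S] [CommRing R] (φ : S →+* R) (c : R) (d : ℕ → R) (r : S) :
    T φ c d (C r) = C (φ r) := by simp [T]

lemma T_Y {S R : Type*} [CommRing S] [CommRing R] (φ : S →+* R) (c : R) (d : ℕ → R) (k : ℕ) :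
    T φ c d (Y S k) = C c * Y R k + C (d k) * Y R (k - 1) := by
  rw [T, Y, coe_eval₂Hom, eval₂_X]; rfl

lemma hom_ext {S A : Type*} [CommRing S] [CommRing A] (f g : MvPolynomial ℕᵒᵈ S →+* A)
    (h1 : ∀ r, f (C r) = g (C r)) (h2 : ∀ k, f (Y S k) = g (Y S k)) : f = g :=
  MvPolynomial.ringHom_ext h1 (fun k => h2 (OrderDual.ofDual k))

section
variable {S R : Type*} [CommRing S] [CommRing R] [IsDomain R] (φ : S →+* R) (c : R) (d : ℕ → R)

lemma single_lt (k : ℕ) : mo.toSyn (Finsupp.single (OrderDual.toDual k) 1) <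
    mo.toSyn (Finsupp.single (OrderDual.toDual (k+1)) 1) := by
  unfold mo
  rw [MonomialOrder.lex_lt_iff, Finsupp.Lex.single_lt_iff]
  exact OrderDual.toDual_lt_toDual.2 (Nat.lt_succ_self k)

lemma T_X (hc : c ≠ 0) (hd : d 0 = 0) (k : ℕᵒᵈ) :
    mo.degree (T φ c d (X k)) = Finsupp.single k 1 ∧ mo.leadingCoeff (T φ c d (X k)) = c := by
  have h1 : mo.degree (C c * X k : MvPolynomial ℕᵒᵈ R) = Finsupp.single k 1 := by
    rw [mo.degree_mul (by simpa using hc) (X_ne_zero _), mo.degree_C, mo.degree_X, zero_add]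
  have h2 : mo.leadingCoeff (C c * X k : MvPolynomial ℕᵒᵈ R) = c := by
    rw [mo.leadingCoeff_mul, mo.leadingCoeff_C, mo.leadingCoeff_X, mul_one]
  simp only [T, coe_eval₂Hom, eval₂_X]
  induction k using OrderDual.rec with | _ k =>
  rcases k with _ | k
  · simp only [OrderDual.ofDual_toDual, hd, C_0, zero_mul, add_zero]
    exact ⟨h1, h2⟩
  · have : mo.toSyn (mo.degree (C (d (k+1)) * X (OrderDual.toDual k) : MvPolynomial ℕᵒᵈ R)) <
        mo.toSyn (mo.degree (C c * X (OrderDual.toDual (k+1)) : MvPolynomial ℕᵒᵈ R)) := by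
      rw [h1]
      refine lt_of_le_of_lt ?_ (single_lt k)
      refine mo.degree_mul_le.trans ?_
      rw [mo.degree_C, mo.degree_X, zero_add]
    simp only [OrderDual.ofDual_toDual, Nat.add_sub_cancel]
    rw [mo.degree_add_of_lt this, mo.leadingCoeff_add_of_lt this]
    exact ⟨h1, h2⟩

lemma T_mon (hc : c ≠ 0) (hd : d 0 = 0) (β : ℕᵒᵈ →₀ ℕ) :
    mo.degree (T φ c d (monomial β 1)) = β ∧
      mo.leadingCoeff (T φ c d (monomial β 1)) = c ^ β.degree := by
  induction β using Finsupp.induction_linear with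
  | zero => 
    have : (monomial (0 : ℕᵒᵈ →₀ ℕ) (1 : S)) = 1 := rfl
    simp [this]
  | add f g hf hg =>
    have : (monomial (f + g) (1 : S)) = monomial f 1 * monomial g 1 := by simp [monomial_mul]
    rw [this, map_mul]
    have e1 : T φ c d (monomial f 1) ≠ 0 := by
      rw [← mo.leadingCoeff_ne_zero_iff, hf.2]; exact pow_ne_zero _ hc
    have e2 : T φ c d (monomial g 1) ≠ 0 := by
      rw [← mo.leadingCoeff_ne_zero_iff, hg.2]; exact pow_ne_zero _ hc
    rw [mo.degree_mul e1 e2, mo.leadingCoeff_mul, hf.1, hf.2, hg.1, hg.2, map_add, pow_add]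
    exact ⟨rfl, rfl⟩
  | single k n =>
    have : (monomial (Finsupp.single k n) (1 : S)) = X k ^ n := by simp [X_pow_eq_monomial]
    rw [this, map_pow, mo.degree_pow, mo.leadingCoeff_pow, (T_X φ c d hc hd k).1,
      (T_X φ c d hc hd k).2]
    simp

lemma T_apply (P : MvPolynomial ℕᵒᵈ S) :
    T φ c d P = ∑ β ∈ P.support, C (φ (coeff β P)) * T φ c d (monomial β 1) := by
  conv_lhs => rw [P.as_sum, map_sum]
  refine Finset.sum_congr rfl fun β _ => ?_
  have : monomial β (coeff β P) = C (coeff β P) * monomial β 1 := by simp [C_mul_monomial]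
  rw [this, map_mul]
  simp [T]

lemma T_spec (hφ : Function.Injective φ) (hc : c ≠ 0) (hd : d 0 = 0) (P : MvPolynomial ℕᵒᵈ S)
    (hP : P ≠ 0) :
    mo.degree (T φ c d P) = mo.degree P ∧
      mo.leadingCoeff (T φ c d P) = φ (mo.leadingCoeff P) * c ^ (mo.degree P).degree := by
  have hle : mo.toSyn (mo.degree (T φ c d P)) ≤ mo.toSyn (mo.degree P) := by
    rw [mo.degree_le_iff]
    intro γ hγ
    by_contra hlt
    push Not at hlt
    rw [mem_support_iff] at hγ
    apply hγ
    rw [T_apply, coeff_sum]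
    refine Finset.sum_eq_zero fun β hβ => ?_
    rw [coeff_C_mul, mo.coeff_eq_zero_of_lt (f := T φ c d (monomial β 1)), mul_zero]
    rw [(T_mon φ c d hc hd β).1]
    exact (mo.le_degree hβ).trans_lt hlt
  have hco : coeff (mo.degree P) (T φ c d P) =
      φ (mo.leadingCoeff P) * c ^ (mo.degree P).degree := by
    rw [T_apply, coeff_sum, Finset.sum_eq_single (mo.degree P)]
    · rw [coeff_C_mul, ← (T_mon φ c d hc hd (mo.degree P)).2]
      congr 1
      rw [leadingCoeff, (T_mon φ c d hc hd (mo.degree P)).1]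
    · intro β hβ hne
      rw [coeff_C_mul, mo.coeff_eq_zero_of_lt (f := T φ c d (monomial β 1)), mul_zero]
      rw [(T_mon φ c d hc hd β).1]
      exact lt_of_le_of_ne (mo.le_degree hβ) (fun h => hne (mo.toSyn.injective h))
    · intro h
      exact absurd (mo.degree_mem_support hP) h
  have hne : coeff (mo.degree P) (T φ c d P) ≠ 0 := by
    rw [hco]
    refine mul_ne_zero ?_ (pow_ne_zero _ hc)
    rw [Ne, map_eq_zero_iff φ hφ, mo.leadingCoeff_eq_zero_iff]
    exact hP
  have hdeg : mo.degree (T φ c d P) = mo.degree P :=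
    mo.toSyn.injective (le_antisymm hle (mo.le_degree (mem_support_iff.2 hne)))
  refine ⟨hdeg, ?_⟩
  rw [leadingCoeff, hdeg, hco]

lemma T_inj (hφ : Function.Injective φ) (hc : c ≠ 0) (hd : d 0 = 0) (P : MvPolynomial ℕᵒᵈ S)
    (h : T φ c d P = 0) : P = 0 := by
  by_contra hP
  have := (T_spec φ c d hφ hc hd P hP).2
  rw [h, mo.leadingCoeff_zero] at this
  refine mul_ne_zero ?_ (pow_ne_zero _ hc) this.symm
  rw [Ne, map_eq_zero_iff φ hφ, mo.leadingCoeff_eq_zero_iff]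
  exact hP

end

/-- set `Y₀ = 0` -/
noncomputable def Z (R : Type*) [CommRing R] : MvPolynomial ℕᵒᵈ R →+* MvPolynomial ℕᵒᵈ R :=
  eval₂Hom C (fun k => if OrderDual.ofDual k = 0 then 0 else X k)

lemma Z_C {R : Type*} [CommRing R] (r : R) : Z R (C r) = C r := by simp [Z]

lemma Z_Y0 {R : Type*} [CommRing R] : Z R (Y R 0) = 0 := by
  rw [Z, Y, coe_eval₂Hom, eval₂_X]; exact if_pos rfl

lemma Z_Ys {R : Type*} [CommRing R] (k : ℕ) : Z R (Y R (k + 1)) = Y R (k + 1) := by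
  rw [Z, Y, coe_eval₂Hom, eval₂_X, if_neg]
  exact Nat.succ_ne_zero k

lemma dvd_of_Z {R : Type*} [CommRing R] (P : MvPolynomial ℕᵒᵈ R) (h : Z R P = 0) :
    Y R 0 ∣ P := by
  have key : ∀ P : MvPolynomial ℕᵒᵈ R, Y R 0 ∣ P - Z R P := by
    intro P
    induction P using MvPolynomial.induction_on with
    | C a => simp [Z_C]
    | add p q hp hq =>
      rw [map_add, add_sub_add_comm]; exact dvd_add hp hq
    | mul_X p k hp =>
      have : p * X k - Z R (p * X k) = (p - Z R p) * X k + Z R p * (X k - Z R (X k)) := by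
        rw [map_mul]; ring
      rw [this]
      refine dvd_add (hp.mul_right _) (Dvd.dvd.mul_left ?_ _)
      change Y R 0 ∣ Y R (OrderDual.ofDual k) - Z R (Y R (OrderDual.ofDual k))
      rcases OrderDual.ofDual k with _ | k
      · rw [Z_Y0, sub_zero]
      · rw [Z_Ys, sub_self]; exact dvd_zero _
  have := key P
  rwa [h, sub_zero] at this

lemma T_zero_Z (p : MvPolynomial ℕᵒᵈ ℂ)
    (h : T (RingHom.id ℂ) 0 (fun k => (k : ℂ)) p = 0) : Z ℂ p = 0 := by
  let ρ : MvPolynomial ℕᵒᵈ ℂ →+* MvPolynomial ℕᵒᵈ ℂ :=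
    eval₂Hom C (fun k => C (((OrderDual.ofDual k : ℕ) + 1 : ℂ)⁻¹) *
      Y ℂ (OrderDual.ofDual k + 1))
  have ρC : ∀ r, ρ (C r) = C r := by intro r; simp [ρ]
  have ρY : ∀ k, ρ (Y ℂ k) = C ((k + 1 : ℂ)⁻¹) * Y ℂ (k + 1) := by
    intro k
    simp only [ρ]
    rw [Y, coe_eval₂Hom, eval₂_X]; rfl
  have : ρ.comp (T (RingHom.id ℂ) 0 (fun k => (k : ℂ))) = Z ℂ := by
    apply hom_ext
    · intro r; simp [ρC, T_C, Z_C]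
    · intro k
      rcases k with _ | k
      · simp [T_Y, Z_Y0]
      · have h0 : (k + 1 : ℂ) ≠ 0 := by exact_mod_cast Nat.succ_ne_zero k
        rw [RingHom.comp_apply, T_Y, Z_Ys, C_0, zero_mul, zero_add, map_mul, ρC,
          Nat.add_sub_cancel, ρY, ← mul_assoc, ← C_mul]
        push_cast
        rw [mul_inv_cancel₀ h0, C_1, one_mul]
  rw [← this, RingHom.comp_apply, h, map_zero]

lemma T_Z (c : ℂ) (p : MvPolynomial ℕᵒᵈ ℂ) (hc : c ≠ 0)
    (h : Z ℂ (T (RingHom.id ℂ) c (fun k => (k : ℂ)) p) = 0) : Z ℂ p = 0 := by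
  refine T_inj (RingHom.id ℂ) c (fun k => if k ≤ 1 then 0 else (k : ℂ)) (fun _ _ h => h) hc
    (by simp) _ ?_
  have : (T (RingHom.id ℂ) c (fun k => if k ≤ 1 then 0 else (k : ℂ))).comp (Z ℂ) =
      (Z ℂ).comp (T (RingHom.id ℂ) c (fun k => (k : ℂ))) := by
    apply hom_ext
    · intro r; simp [T_C, Z_C]
    · intro k
      rcases k with _ | _ | k
      · simp [T_Y, Z_Y0, Z_C]
      · simp [T_Y, Z_Y0, Z_C, Z_Ys]
      · simp [T_Y, Z_C, Z_Ys]
  rw [← RingHom.comp_apply, this, RingHom.comp_apply, h]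

lemma gamma_rec (k : ℕ) : ∀ z : ℂ, 0 < z.re →
    iteratedDeriv k Complex.Gamma (z + 1) =
      z * iteratedDeriv k Complex.Gamma z + k * iteratedDeriv (k - 1) Complex.Gamma z := by
  have hdiff : ∀ (k : ℕ) (z : ℂ), 0 < z.re →
      DifferentiableAt ℂ (iteratedDeriv k Complex.Gamma) z := by
    have ho : IsOpen {z : ℂ | 0 < z.re} := isOpen_lt continuous_const Complex.continuous_re
    have hG : DifferentiableOn ℂ Complex.Gamma {z : ℂ | 0 < z.re} := by
      intro z hz
      refine (Complex.differentiableAt_Gamma z ?_).differentiableWithinAt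
      rintro m rfl
      have : (0 : ℝ) < -m := by simpa using hz
      have := Nat.cast_nonneg (α := ℝ) m
      linarith
    intro k
    induction k with
    | zero =>
      intro z hz
      rw [iteratedDeriv_zero]
      exact (hG z hz).differentiableAt (ho.mem_nhds hz)
    | succ k ih =>
      intro z hz
      rw [iteratedDeriv_succ]
      have : DifferentiableOn ℂ (iteratedDeriv k Complex.Gamma) {z : ℂ | 0 < z.re} :=
        fun w hw => (ih w hw).differentiableWithinAt
      exact (this.deriv ho z hz).differentiableAt (ho.mem_nhds hz)
  induction k with
  | zero =>
    intro z hz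
    have : z ≠ 0 := by rintro rfl; simp at hz
    simp [Complex.Gamma_add_one z this]
  | succ k ih =>
    intro z hz
    have ho : IsOpen {z : ℂ | 0 < z.re} := isOpen_lt continuous_const Complex.continuous_re
    have hev : (fun z => iteratedDeriv k Complex.Gamma (z + 1)) =ᶠ[nhds z] fun z =>
        z * iteratedDeriv k Complex.Gamma z + k * iteratedDeriv (k - 1) Complex.Gamma z := by
      filter_upwards [ho.mem_nhds hz] with w hw using ih w hw
    have h1 := hev.deriv_eq
    rw [deriv_comp_add_const, ← iteratedDeriv_succ] at h1
    rw [h1]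
    have hD := ((hasDerivAt_id z).mul (hdiff k z hz).hasDerivAt).add
      ((hdiff (k-1) z hz).hasDerivAt.const_mul (k : ℂ))
    rw [← iteratedDeriv_succ, ← iteratedDeriv_succ] at hD
    refine hD.deriv.trans ?_
    rcases k with _ | k
    · simp; ring
    · simp; ring


open Filter in
lemma poly_eventually_ne (a : Polynomial ℂ) (ha : a ≠ 0) :
    ∀ᶠ x : ℝ in atTop, a.eval (x : ℂ) ≠ 0 := by
  have hf : {x : ℝ | a.eval (x : ℂ) = 0}.Finite := by
    have h1 : {z : ℂ | a.IsRoot z}.Finite := Polynomial.finite_setOfPred_isRoot ha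
    exact h1.preimage (Complex.ofReal_injective.injOn)
  have := hf.bddAbove
  obtain ⟨M, hM⟩ := this
  filter_upwards [eventually_gt_atTop M] with x hx h0
  exact absurd (hM h0) (not_le.2 hx)

noncomputable def shift : Polynomial ℂ →+* Polynomial ℂ :=
  Polynomial.compRingHom (Polynomial.X + Polynomial.C 1)

lemma shift_natDegree (a : Polynomial ℂ) : (shift a).natDegree = a.natDegree := by
  simp only [shift, Polynomial.coe_compRingHom_apply]
  rw [Polynomial.natDegree_comp, Polynomial.natDegree_X_add_C, mul_one]

lemma shift_eval (a : Polynomial ℂ) (z : ℂ) : (shift a).eval z = a.eval (z + 1) := by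
  simp [shift, Polynomial.eval_comp]

lemma shift_inj : Function.Injective shift := by
  intro a b h
  refine Polynomial.funext fun z => ?_
  have := congrArg (Polynomial.eval (z - 1)) h
  simpa [shift_eval] using this

noncomputable def sig : MvPolynomial ℕᵒᵈ (Polynomial ℂ) →+* MvPolynomial ℕᵒᵈ (Polynomial ℂ) :=
  T shift Polynomial.X (fun k => (k : Polynomial ℂ))

noncomputable def ev (γ : ℂ) : MvPolynomial ℕᵒᵈ (Polynomial ℂ) →+* MvPolynomial ℕᵒᵈ ℂ :=
  MvPolynomial.map (Polynomial.evalRingHom γ)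

lemma ev_C (γ : ℂ) (r : Polynomial ℂ) : ev γ (C r) = C (r.eval γ) := by simp [ev]

lemma ev_Y (γ : ℂ) (k : ℕ) : ev γ (Y _ k) = Y _ k := by simp [ev, Y]

lemma ev_sig (γ : ℂ) (P) :
    ev γ (sig P) = T (RingHom.id ℂ) γ (fun k => (k : ℂ)) (ev (γ + 1) P) := by
  have : (ev γ).comp sig = (T (RingHom.id ℂ) γ (fun k => (k : ℂ))).comp (ev (γ + 1)) := by
    apply hom_ext
    · intro r; simp [sig, T_C, ev_C, shift_eval]
    · intro k
      simp [sig, T_Y, ev_C, ev_Y]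
  exact congrArg (fun f => f P) this

lemma Z_ev (γ : ℂ) (P) : Z ℂ (ev γ P) = ev γ (Z _ P) := by
  have : (Z ℂ).comp (ev γ) = (ev γ).comp (Z _) := by
    apply hom_ext
    · intro r; simp [Z_C, ev_C]
    · intro k
      rcases k with _ | k
      · simp [ev_Y, Z_Y0]
      · simp [ev_Y, Z_Ys]
  exact congrArg (fun f => f P) this

noncomputable def evz (z : ℂ) : MvPolynomial ℕᵒᵈ (Polynomial ℂ) →+* ℂ :=
  eval₂Hom (Polynomial.evalRingHom z)
    (fun k => iteratedDeriv (OrderDual.ofDual k) Complex.Gamma z)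

lemma evz_C (z : ℂ) (r) : evz z (C r) = r.eval z := by simp [evz]
lemma evz_Y (z : ℂ) (k) : evz z (Y _ k) = iteratedDeriv k Complex.Gamma z := by
  rw [evz, Y, coe_eval₂Hom, eval₂_X]; rfl

lemma evz_sig (z : ℂ) (hz : 0 < z.re) (P) : evz z (sig P) = evz (z + 1) P := by
  have : (evz z).comp sig = evz (z + 1) := by
    apply hom_ext
    · intro r; simp [sig, T_C, evz_C, shift_eval]
    · intro k
      simp [sig, T_Y, evz_C, evz_Y, gamma_rec k z hz]
  exact congrArg (fun f => f P) this

open Filter in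
def Van (P : MvPolynomial ℕᵒᵈ (Polynomial ℂ)) : Prop := ∀ᶠ x : ℝ in atTop, evz (x : ℂ) P = 0

open Filter in
lemma Van.sig {P} (h : Van P) : Van (sig P) := by
  have h1 := (tendsto_atTop_add_const_right atTop (1 : ℝ) tendsto_id).eventually h
  unfold Van
  filter_upwards [h1, eventually_gt_atTop 0] with x hx hx0
  rw [evz_sig _ (by simpa using hx0)]
  simpa using hx

lemma coeff_eq_zero_of_ev {P : MvPolynomial ℕᵒᵈ (Polynomial ℂ)} {γ : ℂ} (h : ev γ P = 0) (i) :
    (coeff i P).eval γ = 0 := by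
  have := congrArg (coeff i) h
  simpa [ev, coeff_map] using this

lemma Z_zero_case {P : MvPolynomial ℕᵒᵈ (Polynomial ℂ)} {q : Polynomial ℂ}
    (h : sig P = C q * P) (hq : q.eval 0 = 0) : Y _ 0 ∣ P := by
  apply dvd_of_Z
  have key : ∀ m : ℕ, Z ℂ (ev (m + 1 : ℂ) P) = 0 := by
    intro m
    induction m with
    | zero =>
      apply T_zero_Z
      have := ev_sig 0 P
      rw [h, map_mul, ev_C, hq, C_0, zero_mul] at this
      simpa using this.symm
    | succ m ih =>
      apply T_Z (m + 1 : ℂ) _ (by exact_mod_cast Nat.succ_ne_zero m)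
      push_cast
      rw [← ev_sig, h, map_mul, map_mul, ih, mul_zero]
  ext1 i
  rw [coeff_zero]
  refine Polynomial.eq_zero_of_infinite_isRoot _ ?_
  refine (Set.infinite_range_of_injective (f := fun m : ℕ => (m + 1 : ℂ)) ?_).mono ?_
  · intro a b hab
    simpa using hab
  · rintro _ ⟨m, rfl⟩
    have := key m
    rw [Z_ev] at this
    exact coeff_eq_zero_of_ev this i

noncomputable def meas (P : MvPolynomial ℕᵒᵈ (Polynomial ℂ)) : mo.syn ×ₗ WithBot ℕ :=
  toLex (mo.toSyn (mo.degree P), (mo.leadingCoeff P).degree)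

theorem no_van (P₀ : MvPolynomial ℕᵒᵈ (Polynomial ℂ)) (h0 : P₀ ≠ 0) (hV : Van P₀) : False := by
  obtain ⟨P, ⟨hP, hVP⟩, hmin⟩ := (InvImage.wf meas (wellFounded_lt)).has_min
    {P | P ≠ 0 ∧ Van P} ⟨P₀, h0, hV⟩
  replace hmin : ∀ Q, Q ≠ 0 → Van Q → ¬ meas Q < meas P := fun Q h1 h2 => hmin Q ⟨h1, h2⟩
  have ha : mo.leadingCoeff P ≠ 0 := by rwa [Ne, mo.leadingCoeff_eq_zero_iff]
  obtain ⟨hs1, hs2⟩ := T_spec shift Polynomial.X (fun k => (k : Polynomial ℂ)) shift_inj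
    Polynomial.X_ne_zero (by simp) P hP
  change mo.degree (sig P) = _ at hs1
  change mo.leadingCoeff (sig P) = _ at hs2
  set a := mo.leadingCoeff P with ha_def
  set b := mo.leadingCoeff (sig P) with hb
  -- division
  have hdiv : sig P = C (b / a) * P := by
    by_contra hne
    have hQ : sig P - C (b / a) * P ≠ 0 := sub_ne_zero.2 hne
    set Q := sig P - C (b / a) * P with hQd
    have hVQ : Van Q := by
      have := hVP.sig
      unfold Van at this hVP ⊢
      filter_upwards [this, hVP] with x h1 h2
      rw [hQd, map_sub, map_mul, h1, h2]; simp
    apply hmin Q hQ hVQ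
    have hle : mo.toSyn (mo.degree Q) ≤ mo.toSyn (mo.degree P) := by
      refine mo.degree_sub_le.trans (sup_le (by rw [hs1]) ?_)
      refine mo.degree_mul_le.trans ?_
      rw [mo.degree_C, zero_add]
    have hc : coeff (mo.degree P) Q = b % a := by
      rw [hQd, coeff_sub, coeff_C_mul, EuclideanDomain.mod_eq_sub_mul_div]
      have : coeff (mo.degree P) (sig P) = b := by rw [hb, leadingCoeff, hs1]
      rw [this, mul_comm]; rfl
    rw [meas, meas, Prod.Lex.toLex_lt_toLex]
    rcases hle.lt_or_eq with h | h
    · exact Or.inl h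
    · refine Or.inr ⟨h, ?_⟩
      have h' := mo.toSyn.injective h
      change (mo.leadingCoeff Q).degree < a.degree
      rw [leadingCoeff, h', hc]
      exact EuclideanDomain.mod_lt _ ha
  set q := b / a with hq
  have hlc : b = q * a := by
    rw [hb, hdiv, mo.leadingCoeff_mul, mo.leadingCoeff_C]
  have hq0 : q ≠ 0 := by
    intro h
    rw [h, zero_mul, hs2] at hlc
    refine mul_ne_zero ?_ (pow_ne_zero _ Polynomial.X_ne_zero) hlc
    rwa [Ne, map_eq_zero_iff shift shift_inj]
  have hdeg : q.natDegree = (mo.degree P).degree := by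
    have h1 := congrArg Polynomial.natDegree (hs2.symm.trans hlc)
    rw [Polynomial.natDegree_mul hq0 ha, Polynomial.natDegree_mul
      (by rwa [Ne, map_eq_zero_iff shift shift_inj]) (pow_ne_zero _ Polynomial.X_ne_zero),
      shift_natDegree, Polynomial.natDegree_X_pow] at h1
    omega
  by_cases hd0 : mo.degree P = 0
  · have hPC := mo.eq_C_of_degree_eq_zero hd0
    have h1 := poly_eventually_ne a ha
    unfold Van at hVP
    obtain ⟨x, hx1, hx2⟩ := (h1.and hVP).exists
    rw [hPC, evz_C] at hx2
    exact hx1 hx2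
  have hqd : q.degree ≠ 0 := by
    intro h
    have : q.natDegree = 0 := Polynomial.natDegree_eq_of_degree_eq_some h
    rw [hdeg, Finsupp.degree_eq_zero_iff] at this
    exact hd0 this
  obtain ⟨γ, hγ⟩ := IsAlgClosed.exists_root q hqd
  by_cases hγ0 : γ = 0
  · subst hγ0
    obtain ⟨Q, hQ⟩ := Z_zero_case hdiv hγ
    have hQ0 : Q ≠ 0 := by rintro rfl; simp at hQ; exact hP hQ
    refine hmin Q hQ0 ?_ ?_
    · unfold Van at hVP ⊢
      filter_upwards [hVP, Filter.eventually_gt_atTop 0] with x hx hx0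
      rw [hQ, map_mul, evz_Y, iteratedDeriv_zero] at hx
      exact (mul_eq_zero.1 hx).resolve_left (Complex.Gamma_ne_zero_of_re_pos (by simpa using hx0))
    · rw [meas, meas, Prod.Lex.toLex_lt_toLex]
      left
      change mo.toSyn (mo.degree Q) < mo.toSyn (mo.degree P)
      rw [hQ, Y, mo.degree_mul (X_ne_zero _) hQ0, map_add]
      refine lt_add_of_pos_left _ ?_
      rw [mo.toSyn_lt_iff_ne_zero, Ne, mo.toSyn_eq_zero_iff, mo.degree_X]
      simp
  · have hev : ev (γ + 1) P = 0 := by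
      apply T_inj (RingHom.id ℂ) γ (fun k => (k : ℂ)) (fun _ _ h => h) hγ0 (by simp)
      have hγ' : q.eval γ = 0 := hγ
      rw [← ev_sig, hdiv, map_mul, ev_C, hγ', C_0, zero_mul]
    have hdvd : C (Polynomial.X - Polynomial.C (γ + 1)) ∣ P := by
      rw [C_dvd_iff_dvd_coeff]
      intro i
      rw [Polynomial.dvd_iff_isRoot]
      exact coeff_eq_zero_of_ev hev i
    obtain ⟨Q, hQ⟩ := hdvd
    have hQ0 : Q ≠ 0 := by rintro rfl; simp at hQ; exact hP hQ
    have hX : (Polynomial.X - Polynomial.C (γ + 1)) ≠ 0 := Polynomial.X_sub_C_ne_zero _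
    refine hmin Q hQ0 ?_ ?_
    · unfold Van at hVP ⊢
      filter_upwards [hVP, poly_eventually_ne _ hX] with x hx hx0
      rw [hQ, map_mul, evz_C] at hx
      exact (mul_eq_zero.1 hx).resolve_left hx0
    · rw [meas, meas, Prod.Lex.toLex_lt_toLex]
      right
      have hCX : (C (Polynomial.X - Polynomial.C (γ + 1)) : MvPolynomial ℕᵒᵈ (Polynomial ℂ)) ≠ 0 := by
        rwa [Ne, C_eq_zero]
      refine ⟨?_, ?_⟩
      · change mo.toSyn (mo.degree Q) = mo.toSyn (mo.degree P)
        rw [hQ, mo.degree_mul hCX hQ0, mo.degree_C, zero_add]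
      · change (mo.leadingCoeff Q).degree < (mo.leadingCoeff P).degree
        have hlq : mo.leadingCoeff Q ≠ 0 := by rwa [Ne, mo.leadingCoeff_eq_zero_iff]
        rw [hQ, mo.leadingCoeff_mul, mo.leadingCoeff_C]
        apply Polynomial.degree_lt_degree
        rw [Polynomial.natDegree_mul hX hlq, Polynomial.natDegree_X_sub_C]
        omega

def emb (n : ℕ) (i : Fin (n + 2)) : Option ℕᵒᵈ :=
  if i.val = 0 then none else some (OrderDual.toDual (i.val - 1))

lemma emb_inj (n : ℕ) : Function.Injective (emb n) := by
  intro i j h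
  unfold emb at h
  split_ifs at h with h1 h2 h2
  · exact Fin.ext (h1.trans h2.symm)
  · have : i.val - 1 = j.val - 1 := OrderDual.toDual.injective (Option.some.inj h)
    exact Fin.ext (by omega)

end HolderGamma


/-- The complex Gamma function is differentially transcendental: there are no `n ∈ ℕ` and
nonzero polynomial `P ∈ ℂ[X₀, …, X_{n+1}]` with `P (z, Γ z, Γ' z, …, Γ⁽ⁿ⁾ z) = 0` at every
`z ∈ ℂ` that is not a nonpositive integer (i.e. at every point where `Γ` is analytic). -/
theorem complexGamma_diffTranscendental :
    ¬ ∃ (n : ℕ) (P : MvPolynomial (Fin (n + 2)) ℂ),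
      P ≠ 0 ∧ ∀ z : ℂ, (∀ k : ℕ, z ≠ -(k : ℂ)) →
        MvPolynomial.eval
          (fun i : Fin (n + 2) =>
            if i.val = 0 then z else iteratedDeriv (i.val - 1) Complex.Gamma z) P = 0 := by
  rintro ⟨n, P, hP, h⟩
  let F := MvPolynomial.optionEquivRight ℂ ℕᵒᵈ
  refine HolderGamma.no_van (F (MvPolynomial.rename (HolderGamma.emb n) P)) ?_ ?_
  · rw [Ne, map_eq_zero_iff F F.injective,
      map_eq_zero_iff _ (MvPolynomial.rename_injective _ (HolderGamma.emb_inj n))]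
    exact hP
  · unfold HolderGamma.Van
    filter_upwards [Filter.eventually_gt_atTop 0] with x hx
    rw [← h x ?_]
    · have : ((HolderGamma.evz (x : ℂ)).comp F.toAlgHom.toRingHom).comp
          (MvPolynomial.rename (R := ℂ) (HolderGamma.emb n)).toRingHom =
          MvPolynomial.eval (fun i : Fin (n + 2) =>
            if i.val = 0 then (x : ℂ) else iteratedDeriv (i.val - 1) Complex.Gamma x) := by
        apply MvPolynomial.ringHom_ext
        · intro r
          change HolderGamma.evz (x : ℂ) (F (MvPolynomial.rename (HolderGamma.emb n)
            (MvPolynomial.C r))) = _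
          simp [F, MvPolynomial.optionEquivRight_C, HolderGamma.evz_C]
        · intro i
          change HolderGamma.evz (x : ℂ) (F (MvPolynomial.rename (HolderGamma.emb n)
            (MvPolynomial.X i))) = _
          simp only [MvPolynomial.rename_X, MvPolynomial.eval_X, HolderGamma.emb, F]
          split_ifs with hi
          · rw [MvPolynomial.optionEquivRight_X_none, HolderGamma.evz_C, Polynomial.eval_X]
          · rw [MvPolynomial.optionEquivRight_X_some]
            exact HolderGamma.evz_Y _ _
      exact congrArg (fun f => f P) this
    · intro k hk
      have h1 := congrArg Complex.re hk
      simp at h1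
      have := Nat.cast_nonneg (α := ℝ) k
      linarith
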